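/- Let D and E be reflexive relations on a finite type V. Then Ḡ := Relation.TransGen (prec E) is the least element of the set of partially nested relations containing E: (i) E ⊆ Ḡ and Ḡ is partially nested; (ii) for every partially nested relation G with E ⊆ G, one has Ḡ ⊆ G. (Graph-theoretic content of Theorem 1: since the optimal cost J*(G) of the decentralized control problem is antitone in the information graph G, this ⊆-minimality means Ḡ maximizes the lower bound J*(G) over all partially nested information relaxations G ⊇ E.) -/

import Mathlib

/-- The precedence relation induced by the coupling relation `D` and the
information graph `E`: subsystem `j` is a precedent of subsystem `i` if some
subsystem `k` whose outputs `i` has access to can be affected by `j`'s input. -/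
def prec {V : Type*} (D E : V → V → Prop) (j i : V) : Prop := ∃ k, E k i ∧ D j k

/-- Partial nestedness of the information graph `E` with respect to the
coupling relation `D`: whenever `j` is a precedent of `i`, the in-neighborhood
of `j` is contained in that of `i`. -/
def PartiallyNested {V : Type*} (D E : V → V → Prop) : Prop :=
  ∀ j i, prec D E j i → ∀ k, E k j → E k i

/-!
When `D` is reflexive, a reflexive relation is partially nested exactly when it is transitive and
contains `D`. Hence the least partially nested relation above a reflexive `E` is the transitive
relation generated by `D` and `E`. By reflexivity, both are contained in their composite
`prec D E`, whose transitive closure is therefore that relation.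
-/

section

variable {V : Type*} {D E G : V → V → Prop}

theorem le_prec_left [Std.Refl E] : D ≤ prec D E :=
  fun _ k hjk => ⟨k, refl k, hjk⟩

theorem le_prec_right [Std.Refl D] : E ≤ prec D E :=
  fun j _ hji => ⟨j, hji, refl j⟩

theorem prec_le [IsTrans V G] (hDG : D ≤ G) (hEG : E ≤ G) : prec D E ≤ G := by
  rintro j i ⟨k, hki, hjk⟩
  exact trans_of G (hDG j k hjk) (hEG k i hki)

theorem partiallyNested_of_coupling_le [IsTrans V G] (hDG : D ≤ G) : PartiallyNested D G :=
  fun j i hji _ hkj => trans_of G hkj (prec_le hDG le_rfl j i hji)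

theorem PartiallyNested.isTrans [Std.Refl D] (hG : PartiallyNested D G) : IsTrans V G where
  trans k j i hkj hji := hG j i (le_prec_right j i hji) k hkj

theorem PartiallyNested.coupling_le [Std.Refl G] (hG : PartiallyNested D G) : D ≤ G :=
  fun j k hjk => hG j k (le_prec_left j k hjk) j (refl j)

end

theorem stmt_6_general {V : Type*} (D E : V → V → Prop) [Std.Refl D] [Std.Refl E] :
    IsLeast {G : V → V → Prop | E ≤ G ∧ PartiallyNested D G} (Relation.TransGen (prec D E)) := by
  have prec_le_transGen : prec D E ≤ Relation.TransGen (prec D E) := fun _ _ => .single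
  refine ⟨⟨le_prec_right.trans prec_le_transGen, ?_⟩, ?_⟩
  · exact partiallyNested_of_coupling_le (le_prec_left.trans prec_le_transGen)
  · rintro G ⟨hEG, hG⟩
    have : Std.Refl G := ⟨fun i => hEG i i (refl i)⟩
    have : IsTrans V G := hG.isTrans
    exact Relation.transGen_minimal (prec_le hG.coupling_le hEG)

/-- Graph-theoretic content of Theorem 1: the transitive closure of the
precedence graph is the least partially nested relation containing `E`. -/
theorem stmt_6 {V : Type*} [Fintype V] (D E : V → V → Prop)
    (hD : Reflexive D) (hE : Reflexive E) :
    ((∀ j i, E j i → Relation.TransGen (prec D E) j i) ∧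
      PartiallyNested D (Relation.TransGen (prec D E))) ∧
    (∀ G : V → V → Prop, PartiallyNested D G → (∀ j i, E j i → G j i) →
      ∀ j i, Relation.TransGen (prec D E) j i → G j i) := by
  obtain ⟨hmem, hleast⟩ := @stmt_6_general V D E ⟨hD⟩ ⟨hE⟩
  exact ⟨hmem, fun G hG hEG => hleast ⟨hEG, hG⟩⟩
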